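/- Let k be a positive integer, let μ ∈ D_alg(k), and set f = R_μ and g = η_μ. Then for every n ≥ 1 and all i₁,…,i_n ∈ {1,…,k}: Cf_{(i₁,…,i_n)}(f) = Σ_{ρ ∈ NC(n), ρ ≪ 1_n} (−1)^{1+|ρ|} Cf_{(i₁,…,i_n);ρ}(g). -/

import Mathlib

open Finset

attribute [local instance] Classical.propDecidable

open scoped ComplexOrder

namespace BBP

/-- Partitions of `{1,…,m}` modeled as `Finpartition`s of `univ : Finset (Fin m)`. -/
abbrev FP (m : ℕ) := Finpartition (Finset.univ : Finset (Fin m))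

noncomputable instance (m : ℕ) : Fintype (FP m) :=
  Fintype.ofInjective (fun π : FP m => π.parts) fun a b h => by
    cases a; cases b; simpa using h

/-- `x` is the minimum of the set `C`. -/
def IsMinOf {m : ℕ} (x : Fin m) (C : Finset (Fin m)) : Prop :=
  x ∈ C ∧ ∀ y ∈ C, x ≤ y

/-- `x` is the maximum of the set `C`. -/
def IsMaxOf {m : ℕ} (x : Fin m) (C : Finset (Fin m)) : Prop :=
  x ∈ C ∧ ∀ y ∈ C, y ≤ x

/-- `a` and `b` lie in one block of `π`. -/
def SameBlock {m : ℕ} (π : FP m) (a b : Fin m) : Prop :=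
  ∃ B ∈ π.parts, a ∈ B ∧ b ∈ B

/-- `π` is non-crossing: if `i<j<k<l`, `i,k` in one block and `j,l` in one block,
then all of them are in one block. -/
def IsNC {m : ℕ} (π : FP m) : Prop :=
  ∀ i j k l : Fin m, i < j → j < k → k < l →
    SameBlock π i k → SameBlock π j l → SameBlock π i j

/-- `A` embraces `B` : `min A ≤ min B` and `max B ≤ max A`. -/
def Embraces {m : ℕ} (A B : Finset (Fin m)) : Prop :=
  ∃ a₁ a₂ b₁ b₂ : Fin m, IsMinOf a₁ A ∧ IsMaxOf a₂ A ∧ IsMinOf b₁ B ∧ IsMaxOf b₂ B ∧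
    a₁ ≤ b₁ ∧ b₂ ≤ a₂

/-- `B` strictly embraces `A` : `min B < min A` and `max A < max B`. -/
def StrictlyEmbraces {m : ℕ} (B A : Finset (Fin m)) : Prop :=
  ∃ b₁ b₂ a₁ a₂ : Fin m, IsMinOf b₁ B ∧ IsMaxOf b₂ B ∧ IsMinOf a₁ A ∧ IsMaxOf a₂ A ∧
    b₁ < a₁ ∧ a₂ < b₂

/-- `A` is an outer block of `π`. -/
def IsOuter {m : ℕ} (π : FP m) (A : Finset (Fin m)) : Prop :=
  A ∈ π.parts ∧ ¬ ∃ B ∈ π.parts, StrictlyEmbraces B A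

/-- The number `|π|_out` of outer blocks of `π`. -/
noncomputable def numOuter {m : ℕ} (π : FP m) : ℕ :=
  (π.parts.filter fun A => IsOuter π A).card

/-- Reversed refinement order: every block of `ρ` is a union of blocks of `π`. -/
def Refines {m : ℕ} (π ρ : FP m) : Prop :=
  ∀ B ∈ π.parts, ∃ C ∈ ρ.parts, B ⊆ C

/-- The partial order `π ≪ ρ`. -/
def Ll {m : ℕ} (π ρ : FP m) : Prop :=
  Refines π ρ ∧
    ∀ C ∈ ρ.parts, ∃ B ∈ π.parts, ∃ x y : Fin m,
      IsMinOf x C ∧ IsMaxOf y C ∧ x ∈ B ∧ y ∈ B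

/-- The partition `1ₙ` of `{1,…,n+1}` with a single block. -/
noncomputable def fullPart (n : ℕ) : FP (n+1) :=
  Finpartition.indiscrete (by simpa using (Finset.univ_nonempty (α := Fin (n+1))).ne_empty)

/-- `π` is an interval partition. -/
def IsIntervalPartition {m : ℕ} (π : FP m) : Prop :=
  ∀ B ∈ π.parts, ∀ x ∈ B, ∀ z ∈ B, ∀ y : Fin m, x ≤ y → y ≤ z → y ∈ B

/-- `σ` is the permutation associated to `π` : on each block `{b₁ < ⋯ < b_q}` it is the
cycle `b₁ ↦ b₂ ↦ ⋯ ↦ b_q ↦ b₁`. -/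
def IsAssocPerm {m : ℕ} (π : FP m) (σ : Equiv.Perm (Fin m)) : Prop :=
  ∀ B ∈ π.parts, ∀ b ∈ B, σ b ∈ B ∧
    ((b < σ b ∧ ∀ x ∈ B, b < x → σ b ≤ x) ∨ (IsMaxOf b B ∧ IsMinOf (σ b) B))

/-- `κ` is the Kreweras complement of `π`, characterized by `P_κ = P_π⁻¹ ∘ P_{1ₙ}`,
where `P_{1ₙ}` is the cycle `1 ↦ 2 ↦ ⋯ ↦ n ↦ 1` (i.e. `finRotate`). -/
def IsKrewerasPair {m : ℕ} (π κ : FP m) : Prop :=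
  ∃ σπ σκ : Equiv.Perm (Fin m), IsAssocPerm π σπ ∧ IsAssocPerm κ σκ ∧
    σκ = σπ⁻¹ * finRotate m

/-- the element `2a-1` of `{1,…,2n}`, in `Fin (2n)` (0-indexed). -/
def oddEmb {n : ℕ} (a : Fin n) : Fin (2*n) := ⟨2*a.val, by have := a.isLt; omega⟩

/-- the element `2a` of `{1,…,2n}`, in `Fin (2n)` (0-indexed). -/
def evenEmb {n : ℕ} (a : Fin n) : Fin (2*n) := ⟨2*a.val + 1, by have := a.isLt; omega⟩

/-- `θ = π^(odd) ∪ ρ^(even)` : the blocks of `θ` are the sets `{2a-1 : a ∈ A}` for `A`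
a block of `π` and the sets `{2b : b ∈ B}` for `B` a block of `ρ`. -/
def IsOddEvenJoin {n : ℕ} (π ρ : FP n) (θ : FP (2*n)) : Prop :=
  θ.parts = π.parts.image (fun B => B.image oddEmb) ∪
    ρ.parts.image (fun B => B.image evenEmb)

/-- a block consisting of odd elements of `{1,…,2n}` (even 0-indexed values). -/
def OddBlock {m : ℕ} (B : Finset (Fin m)) : Prop := ∀ x ∈ B, x.val % 2 = 0

/-- a block consisting of even elements of `{1,…,2n}` (odd 0-indexed values). -/
def EvenBlock {m : ℕ} (B : Finset (Fin m)) : Prop := ∀ x ∈ B, x.val % 2 = 1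

/-- every block of `θ` is contained in the odds or in the evens. -/
def ParityPreserving {m : ℕ} (θ : FP m) : Prop :=
  ∀ B ∈ θ.parts, OddBlock B ∨ EvenBlock B

def OppositeParity {m : ℕ} (A B : Finset (Fin m)) : Prop :=
  (OddBlock A ∧ EvenBlock B) ∨ (EvenBlock A ∧ OddBlock B)

def SameParity {m : ℕ} (A B : Finset (Fin m)) : Prop :=
  (OddBlock A ∧ OddBlock B) ∨ (EvenBlock A ∧ EvenBlock B)

/-- `P = Parent_θ(A)` : the unique block `P ≠ A` of `θ` embracing `A` such that every
block `A' ≠ A` of `θ` embracing `A` also embraces `P`. -/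
def IsParent {m : ℕ} (θ : FP m) (A P : Finset (Fin m)) : Prop :=
  P ∈ θ.parts ∧ P ≠ A ∧ Embraces P A ∧
    ∀ A' ∈ θ.parts, A' ≠ A → Embraces A' A → Embraces A' P

/-- `θ` has exactly two outer blocks. -/
def ExactlyTwoOuterBlocks {m : ℕ} (θ : FP m) : Prop :=
  ∃ M ∈ θ.parts, ∃ N ∈ θ.parts, M ≠ N ∧ IsOuter θ M ∧ IsOuter θ N ∧
    ∀ A ∈ θ.parts, IsOuter θ A → A = M ∨ A = N

/-- A series in `ℂ₀⟨⟨z₁,…,z_k⟩⟩`, given by its family of coefficients: `f n w` is the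
coefficient of `z_{w 0} z_{w 1} ⋯ z_{w n}` (a word of length `n+1 ≥ 1`). -/
abbrev NCSeries (k : ℕ) := (n : ℕ) → (Fin (n+1) → Fin k) → ℂ

/-- The coefficient `Cf_{w|B}(f)` of the restriction of the word `w` to the set `B`,
listing the elements of `B` in increasing order.  (Equals `1` for `B = ∅`.) -/
noncomputable def partCoeff {k m : ℕ} (f : NCSeries k) (w : Fin (m+1) → Fin k)
    (B : Finset (Fin (m+1))) : ℂ :=
  if h : B.Nonempty then
    f (B.card - 1) (fun j =>
      w ((B.orderIsoOfFin (Nat.succ_pred_eq_of_pos (Finset.card_pos.mpr h)).symm j).1))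
  else 1

/-- The generalized coefficient `Cf_{w;π}(f) = ∏_{B block of π} Cf_{w|B}(f)`. -/
noncomputable def genCoeff {k m : ℕ} (f : NCSeries k) (w : Fin (m+1) → Fin k)
    (π : FP (m+1)) : ℂ :=
  ∏ B ∈ π.parts, partCoeff f w B

/-- Linear functionals on `ℂ⟨X₁,…,X_k⟩`. -/
abbrev Dist (k : ℕ) := FreeAlgebra ℂ (Fin k) →ₗ[ℂ] ℂ

/-- `μ ∈ D_alg(k)` : `μ` is normalized by `μ(1) = 1`. -/
def IsDalg {k : ℕ} (μ : Dist k) : Prop := μ 1 = 1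

/-- The moment series `M_μ`, with `(momentSeries μ) n w = μ (X_{w 0} ⋯ X_{w n})`. -/
noncomputable def momentSeries {k : ℕ} (μ : Dist k) : NCSeries k :=
  fun _ w => μ ((List.ofFn fun j => FreeAlgebra.ι ℂ (w j)).prod)

/-- `f = R_μ` : the moments of `μ` are obtained from `f` by summation over all
non-crossing partitions. -/
def IsRTransform {k : ℕ} (μ : Dist k) (f : NCSeries k) : Prop :=
  ∀ (n : ℕ) (w : Fin (n+1) → Fin k),
    momentSeries μ n w = ∑ π : FP (n+1), if IsNC π then genCoeff f w π else 0

/-- `g = η_μ` : the moments of `μ` are obtained from `g` by summation over all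
interval partitions. -/
def IsEtaSeries {k : ℕ} (μ : Dist k) (g : NCSeries k) : Prop :=
  ∀ (n : ℕ) (w : Fin (n+1) → Fin k),
    momentSeries μ n w = ∑ π : FP (n+1), if IsIntervalPartition π then genCoeff g w π else 0

/-- `μ ∈ D_c(k)` : `μ` is the joint distribution of a `k`-tuple of selfadjoint elements
with respect to a state on a unital C*-algebra. -/
def IsDc {k : ℕ} (μ : Dist k) : Prop :=
  IsDalg μ ∧
  ∃ (A : Type) (_ : NormedRing A) (_ : StarRing A) (_ : CStarRing A)
    (_ : NormedAlgebra ℂ A) (_ : StarModule ℂ A) (_ : CompleteSpace A)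
    (φ : A →ₗ[ℂ] ℂ) (x : Fin k → A),
      φ 1 = 1 ∧ (∀ a : A, 0 ≤ φ (star a * a)) ∧ (∀ i, IsSelfAdjoint (x i)) ∧
      ∀ (n : ℕ) (w : Fin (n+1) → Fin k),
        momentSeries μ n w = φ ((List.ofFn fun j => x (w j)).prod)

/-- convergence in moments. -/
def ConvInMoments {k : ℕ} (μseq : ℕ → Dist k) (μ : Dist k) : Prop :=
  ∀ P : FreeAlgebra ℂ (Fin k),
    Filter.Tendsto (fun N => μseq N P) Filter.atTop (nhds (μ P))

/-- coefficientwise convergence of series. -/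
def ConvCoeffwise {k : ℕ} (fseq : ℕ → NCSeries k) (f : NCSeries k) : Prop :=
  ∀ (n : ℕ) (w : Fin (n+1) → Fin k),
    Filter.Tendsto (fun N => fseq N n w) Filter.atTop (nhds (f n w))

/-- `ν` is the `p`-fold free additive convolution `μ ⊞ ⋯ ⊞ μ`, i.e. `R_ν = p · R_μ`. -/
def IsNFoldFree {k : ℕ} (p : ℕ) (μ ν : Dist k) : Prop :=
  ∃ f : NCSeries k, IsRTransform μ f ∧ IsRTransform ν (fun n w => (p : ℂ) * f n w)

/-- `ν` is the `p`-fold Boolean convolution `μ ⊎ ⋯ ⊎ μ`, i.e. `η_ν = p · η_μ`. -/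
def IsNFoldBool {k : ℕ} (p : ℕ) (μ ν : Dist k) : Prop :=
  ∃ g : NCSeries k, IsEtaSeries μ g ∧ IsEtaSeries ν (fun n w => (p : ℂ) * g n w)

/-- `ν = 𝔹(μ)` : the Boolean Bercovici–Pata bijection, `R_{𝔹(μ)} = η_μ`. -/
def IsBP {k : ℕ} (μ ν : Dist k) : Prop :=
  ∃ f : NCSeries k, IsEtaSeries μ f ∧ IsRTransform ν f

/-- `μ ∈ D_c(k)` is infinitely divisible with respect to `⊞`. -/
def IsInfDiv {k : ℕ} (μ : Dist k) : Prop :=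
  IsDc μ ∧ ∀ N : ℕ, 0 < N → ∃ ν : Dist k, IsDc ν ∧ IsNFoldFree N ν μ

/-- `g = Reta(f)`, i.e. there is `μ ∈ D_alg(k)` with `f = R_μ` and `g = η_μ`. -/
def RetaRel {k : ℕ} (f g : NCSeries k) : Prop :=
  ∃ μ : Dist k, IsDalg μ ∧ IsRTransform μ f ∧ IsEtaSeries μ g


section LA
variable {α : Type}

/-- left derivative -/
def dv (F : List α → ℂ) (a : α) : List α → ℂ := fun v => F (a :: v)

def lone : List α → ℂ
  | [] => 1
  | _ :: _ => 0

noncomputable def lmul (P Q : List α → ℂ) (u : List α) : ℂ :=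
  ∑ i ∈ Finset.range (u.length + 1), P (u.take i) * Q (u.drop i)

noncomputable def lsub (F A : List α → ℂ) : List α → ℂ
  | [] => F []
  | a :: u => ∑ i ∈ Finset.range (u.length + 1), A (u.take i) * lsub (dv F a) A (u.drop i)
termination_by u => u.length
decreasing_by all_goals (simp only [List.length_cons, List.length_drop, List.length_take]; omega)

/-- free recursion -/
noncomputable def lT (c F : List α → ℂ) : List α → ℂ
  | [] => F []
  | a :: u => ∑ i ∈ Finset.range (u.length + 1),
      lT c c (u.take i) * lT c (dv F a) (u.drop i)
termination_by u => u.length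
decreasing_by all_goals (simp only [List.length_cons, List.length_drop, List.length_take]; omega)

/-- irreducible recursion -/
noncomputable def lJ (F A : List α → ℂ) : List α → ℂ
  | [] => 0
  | a :: u => (if u = [] then F [a] else 0) +
      ∑ i ∈ Finset.range (u.length + 1), A (u.take i) * lJ (dv F a) A (u.drop i)
termination_by u => u.length
decreasing_by all_goals (simp only [List.length_cons, List.length_drop, List.length_take]; omega)

/-- interval recursion -/
noncomputable def lK (c : List α → ℂ) (F : List α → ℂ) : List α → ℂ
  | [] => F []
  | a :: u => lK c (dv F a) u + (if u = [] then 0 else F [a] * lK c c u)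
termination_by u => u.length

theorem lmul_nil (P Q : List α → ℂ) : lmul P Q [] = P [] * Q [] := by
  simp [lmul]

theorem lmul_cons (P Q : List α → ℂ) (a : α) (u : List α) :
    lmul P Q (a :: u) = P [] * Q (a :: u) + lmul (dv P a) Q u := by
  simp only [lmul, List.length_cons]
  rw [Finset.sum_range_succ']
  simp [dv, add_comm]

theorem lsub_nil (F A : List α → ℂ) : lsub F A [] = F [] := by rw [lsub]

theorem lsub_cons (F A : List α → ℂ) (a : α) (u : List α) :
    lsub F A (a :: u) = lmul A (lsub (dv F a) A) u := by rw [lsub]; rfl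

theorem dv_lsub (F A : List α → ℂ) (a : α) :
    dv (lsub F A) a = lmul A (lsub (dv F a) A) := by
  funext u; exact lsub_cons F A a u

theorem dv_lmul (P Q : List α → ℂ) (a : α) :
    dv (lmul P Q) a = P [] • dv Q a + lmul (dv P a) Q := by
  funext u; simp [dv, lmul_cons]

theorem lext {P Q : List α → ℂ} (h0 : P [] = Q []) (h : ∀ a, dv P a = dv Q a) : P = Q := by
  funext u
  cases u with
  | nil => exact h0
  | cons a u => exact congrFun (h a) u

theorem lmul_add_left (P P' Q : List α → ℂ) : lmul (P + P') Q = lmul P Q + lmul P' Q := by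
  funext u; simp [lmul, add_mul, Finset.sum_add_distrib]
theorem lmul_add_right (P Q Q' : List α → ℂ) : lmul P (Q + Q') = lmul P Q + lmul P Q' := by
  funext u; simp [lmul, mul_add, Finset.sum_add_distrib]
theorem lmul_smul_left (z : ℂ) (P Q : List α → ℂ) : lmul (z • P) Q = z • lmul P Q := by
  funext u; simp [lmul, Finset.mul_sum, mul_assoc]
theorem lmul_smul_right (z : ℂ) (P Q : List α → ℂ) : lmul P (z • Q) = z • lmul P Q := by
  funext u; simp [lmul, Finset.mul_sum, mul_left_comm]
theorem lmul_sub_left (P P' Q : List α → ℂ) : lmul (P - P') Q = lmul P Q - lmul P' Q := by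
  funext u; simp [lmul, sub_mul, Finset.sum_sub_distrib]
theorem lmul_sub_right (P Q Q' : List α → ℂ) : lmul P (Q - Q') = lmul P Q - lmul P Q' := by
  funext u; simp [lmul, mul_sub, Finset.sum_sub_distrib]
theorem lmul_zero_left (Q : List α → ℂ) : lmul 0 Q = 0 := by
  funext u; simp [lmul]

theorem dv_add (P Q : List α → ℂ) (a : α) : dv (P + Q) a = dv P a + dv Q a := rfl
theorem dv_sub (P Q : List α → ℂ) (a : α) : dv (P - Q) a = dv P a - dv Q a := rfl
theorem dv_smul (z : ℂ) (Q : List α → ℂ) (a : α) : dv (z • Q) a = z • dv Q a := rfl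
theorem dv_lone (a : α) : dv lone a = 0 := rfl
theorem lone_nil : (lone : List α → ℂ) [] = 1 := rfl

theorem one_lmul (Q : List α → ℂ) : lmul lone Q = Q := by
  funext u
  cases u with
  | nil => simp [lmul_nil, lone]
  | cons a u => simp [lmul_cons, lone, dv_lone, lmul_zero_left]

theorem lmul_assoc' (P Q R : List α → ℂ) (u : List α) :
    lmul (lmul P Q) R u = lmul P (lmul Q R) u := by
  induction u generalizing P Q with
  | nil => simp [lmul_nil, mul_assoc]
  | cons a u ih =>
    rw [lmul_cons, lmul_cons, dv_lmul, lmul_add_left, lmul_smul_left, lmul_nil, lmul_cons]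
    simp [ih]; ring

theorem lmul_assoc (P Q R : List α → ℂ) : lmul (lmul P Q) R = lmul P (lmul Q R) :=
  funext fun u => lmul_assoc' P Q R u

theorem lmul_congr {P P' Q Q' : List α → ℂ} {u : List α}
    (hP : ∀ v, v.length ≤ u.length → P v = P' v) (hQ : ∀ v, v.length ≤ u.length → Q v = Q' v) :
    lmul P Q u = lmul P' Q' u := by
  unfold lmul
  refine Finset.sum_congr rfl fun i _ => ?_
  rw [hP _ (by simp), hQ _ (by simp)]

theorem lmul_one' (P : List α → ℂ) (u : List α) : lmul P lone u = P u := by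
  induction u generalizing P with
  | nil => simp [lmul_nil, lone]
  | cons a u ih => simp [lmul_cons, lone, ih, dv]

theorem lmul_one (P : List α → ℂ) : lmul P lone = P := funext (lmul_one' P)

theorem lcancel {P Q : List α → ℂ} (hP : P [] = 1) (h : lmul P Q = 0) : Q = 0 := by
  have : ∀ n, ∀ u : List α, u.length = n → Q u = 0 := by
    intro n
    induction n using Nat.strong_induction_on with
    | _ n ih =>
      intro u hu
      have h1 := congrFun h u
      unfold lmul at h1
      rw [Finset.sum_range_succ'] at h1
      rw [Finset.sum_eq_zero] at h1
      · simpa [hP] using h1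
      · intro i hi
        rw [Finset.mem_range] at hi
        rw [ih (u.drop (i+1)).length (by simp; omega) _ rfl, mul_zero]
  funext u
  exact this _ u rfl

theorem lsub_lin' (z : ℂ) (F G A : List α → ℂ) (n : ℕ) (u : List α) (hu : u.length ≤ n) :
    lsub (z • F + G) A u = z * lsub F A u + lsub G A u := by
  induction n generalizing F G u with
  | zero =>
    have : u = [] := List.length_eq_zero_iff.mp (by omega)
    subst this; simp [lsub_nil]
  | succ n ih =>
    cases u with
    | nil => simp [lsub_nil]
    | cons a u =>
      simp only [List.length_cons] at hu
      rw [lsub_cons, lsub_cons, lsub_cons, dv_add, dv_smul]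
      rw [lmul_congr (P' := A) (Q' := z • lsub (dv F a) A + lsub (dv G a) A)
        (fun _ _ => rfl) (fun v hv => ih _ _ v (by omega))]
      rw [lmul_add_right, lmul_smul_right]; simp

theorem lsub_lin (z : ℂ) (F G A : List α → ℂ) :
    lsub (z • F + G) A = z • lsub F A + lsub G A :=
  funext fun u => lsub_lin' z F G A u.length u le_rfl

theorem lsub_zero' (A : List α → ℂ) (u : List α) : lsub 0 A u = 0 := by
  have := congrFun (lsub_lin 1 0 0 A) u
  simpa using this

theorem lsub_zero (A : List α → ℂ) : lsub (0 : List α → ℂ) A = 0 := funext (lsub_zero' A)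

theorem lsub_one (A : List α → ℂ) : lsub lone A = lone := by
  apply lext
  · rw [lsub_nil]
  · intro a
    rw [dv_lsub, dv_lone, lsub_zero]
    funext u; simp [lmul]

theorem lsub_mul' (F G A : List α → ℂ) (n : ℕ) (u : List α) (hu : u.length ≤ n) :
    lsub (lmul F G) A u = lmul (lsub F A) (lsub G A) u := by
  induction n generalizing F G u with
  | zero =>
    have : u = [] := List.length_eq_zero_iff.mp (by omega)
    subst this; simp [lsub_nil, lmul_nil]
  | succ n ih =>
    cases u with
    | nil => simp [lsub_nil, lmul_nil]
    | cons a u =>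
      simp only [List.length_cons] at hu
      rw [lsub_cons, dv_lmul, lsub_lin, lmul_add_right, lmul_smul_right, lmul_cons, lsub_nil,
        lsub_cons, dv_lsub, lmul_assoc]
      simp only [Pi.add_apply, Pi.smul_apply, smul_eq_mul]
      congr 1
      exact lmul_congr (fun _ _ => rfl) (fun v hv => ih _ _ v (by omega))

theorem lsub_mul (F G A : List α → ℂ) : lsub (lmul F G) A = lmul (lsub F A) (lsub G A) :=
  funext fun u => lsub_mul' F G A u.length u le_rfl

theorem lsub_comp' (F A B : List α → ℂ) (n : ℕ) (u : List α) (hu : u.length ≤ n) :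
    lsub (lsub F A) B u = lsub F (lmul B (lsub A B)) u := by
  induction n generalizing F u with
  | zero =>
    have : u = [] := List.length_eq_zero_iff.mp (by omega)
    subst this; simp [lsub_nil]
  | succ n ih =>
    cases u with
    | nil => simp [lsub_nil]
    | cons a u =>
      simp only [List.length_cons] at hu
      rw [lsub_cons, lsub_cons, dv_lsub, lsub_mul, lmul_assoc]
      refine lmul_congr (fun _ _ => rfl) (fun v hv => ?_)
      exact lmul_congr (fun _ _ => rfl) (fun v' hv' => ih _ v' (by omega))

theorem lsub_comp (F A B : List α → ℂ) :
    lsub (lsub F A) B = lsub F (lmul B (lsub A B)) :=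
  funext fun u => lsub_comp' F A B u.length u le_rfl

theorem lsub_congr (F A B : List α → ℂ) (n : ℕ) (h : ∀ v : List α, v.length < n → A v = B v)
    (u : List α) (hu : u.length ≤ n) : lsub F A u = lsub F B u := by
  induction n generalizing F u with
  | zero =>
    have : u = [] := List.length_eq_zero_iff.mp (by omega)
    subst this; simp [lsub_nil]
  | succ n ih =>
    cases u with
    | nil => simp [lsub_nil]
    | cons a u =>
      simp only [List.length_cons] at hu
      rw [lsub_cons, lsub_cons]
      exact lmul_congr (fun v hv => h v (by omega))
        (fun v hv => ih _ (fun v' hv' => h v' (by omega)) v (by omega))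

theorem lsub_id' (F : List α → ℂ) (u : List α) : lsub F lone u = F u := by
  induction u generalizing F with
  | nil => rw [lsub_nil]
  | cons a u ih => rw [lsub_cons, one_lmul, ih]; rfl

theorem lsub_inj' {A : List α → ℂ} (hA : A [] = 1) (u : List α) :
    ∀ F : List α → ℂ, lsub F A = 0 → F u = 0 := by
  induction u with
  | nil => intro F h; have := congrFun h []; rwa [lsub_nil] at this
  | cons a u ih =>
    intro F h
    refine ih (dv F a) (lcancel hA ?_)
    rw [← dv_lsub, h]; rfl

theorem lsub_inj {A F G : List α → ℂ} (hA : A [] = 1) (h : lsub F A = lsub G A) : F = G := by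
  have h1 : lsub ((-1 : ℂ) • F + G) A = 0 := by rw [lsub_lin, h]; simp
  funext u
  have := lsub_inj' hA u _ h1
  simp at this
  linear_combination -this

theorem lT_nil (c F : List α → ℂ) : lT c F [] = F [] := by rw [lT]

theorem lT_eq' (c F : List α → ℂ) (n : ℕ) (u : List α) (hu : u.length ≤ n) :
    lT c F u = lsub F (lT c c) u := by
  induction n generalizing F u with
  | zero =>
    have : u = [] := List.length_eq_zero_iff.mp (by omega)
    subst this; simp [lsub_nil, lT_nil]
  | succ n ih =>
    cases u with
    | nil => simp [lsub_nil, lT_nil]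
    | cons a u =>
      simp only [List.length_cons] at hu
      rw [lT, lsub_cons]
      exact lmul_congr (fun _ _ => rfl) (fun v hv => ih _ v (by omega))

theorem lT_self (c : List α → ℂ) : lT c c = lsub c (lT c c) :=
  funext fun u => lT_eq' c c u.length u le_rfl

theorem lJ_nil (c F : List α → ℂ) : lJ c F [] = 0 := by rw [lJ]

theorem dv_lJ (F A : List α → ℂ) (a : α) :
    dv (lJ F A) a = F [a] • lone + lmul A (lJ (dv F a) A) := by
  funext u
  simp only [dv]
  rw [lJ]
  cases u <;> simp [lone, lmul, dv]

theorem lJ_mul' (F A : List α → ℂ) (n : ℕ) (u : List α) (hu : u.length ≤ n) :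
    lmul (lJ F A) A u = lsub F A u - F [] * lone u := by
  induction n generalizing F u with
  | zero =>
    have : u = [] := List.length_eq_zero_iff.mp (by omega)
    subst this; simp [lmul_nil, lsub_nil, lJ_nil, lone]
  | succ n ih =>
    cases u with
    | nil => simp [lmul_nil, lsub_nil, lJ_nil, lone]
    | cons a u =>
      simp only [List.length_cons] at hu
      rw [lmul_cons, dv_lJ, lmul_add_left, lmul_smul_left, one_lmul, lmul_assoc, lJ_nil, lsub_cons]
      simp only [Pi.add_apply, Pi.smul_apply, smul_eq_mul]
      rw [lmul_congr (P' := A) (Q' := lsub (dv F a) A - F [a] • lone)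
        (fun _ _ => rfl) (fun v hv => ih _ v (by omega))]
      rw [lmul_sub_right, lmul_smul_right, lmul_one]
      simp [lone]

theorem lJ_mul (F A : List α → ℂ) : lmul (lJ F A) A = lsub F A - F [] • lone :=
  funext fun u => lJ_mul' F A u.length u le_rfl

theorem lK_nil (c F : List α → ℂ) : lK c F [] = F [] := by rw [lK]

theorem lK_eq (c : List α → ℂ) (hc : c [] = 1) (u : List α) : ∀ F : List α → ℂ,
    lK c F u = lmul (F - F [] • lone) (lK c c) u + F [] * lone u := by
  induction u with
  | nil => intro F; simp [lmul_nil, lK_nil, lone]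
  | cons a u ih =>
    intro F
    rw [lK, ih, lmul_cons, dv_sub, dv_smul, dv_lone, smul_zero, sub_zero, lmul_sub_left,
      lmul_smul_left, one_lmul]
    cases u with
    | nil => simp [lK_nil, lone, dv, hc]
    | cons b u => simp [lone, dv]

/-- the algebraic heart -/
theorem lmain (c d e : List α → ℂ) (he : e [] = 1)
    (hd : d = (2 : ℂ) • lone - e) (hM : lT c c = lK e e) :
    c = lone - lJ d (lT d d) := by
  set M := lK e e with hMdef
  set H := lT d d with hH
  have hM0 : M [] = 1 := by rw [hMdef, lK_nil, he]
  have hdM : lmul d M = lone := by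
    have h1 : M = lmul (e - lone) M + lone := by
      funext u
      have := lK_eq e he u e
      rw [he, one_smul, one_mul] at this
      exact this
    rw [hd, lmul_sub_left, lmul_smul_left, one_lmul]
    rw [lmul_sub_left, one_lmul] at h1
    funext u
    have := congrFun h1 u
    simp at this ⊢
    linear_combination this
  have hd0 : d [] = 1 := by rw [hd]; simp [lone, he]; norm_num
  have hMd : lmul M d = lone := by
    have : lmul M d - lone = 0 := by
      apply lcancel hd0
      rw [lmul_sub_right, ← lmul_assoc, hdM, one_lmul, lmul_one, sub_self]
    exact sub_eq_zero.mp this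
  have hHs : H = lsub d H := lT_self d
  have hJ : lmul (lone - lJ d H) H = lone := by
    rw [lmul_sub_left, one_lmul, lJ_mul, ← hHs, hd0]; simp
  have hG : lsub H M = lsub d (lmul M (lsub H M)) := by
    conv_lhs => rw [hHs]
    exact lsub_comp d H M
  have hGd : ∀ n, ∀ u : List α, u.length < n → lsub H M u = d u := by
    intro n
    induction n with
    | zero => intro u hu; omega
    | succ n ih =>
      intro u hu
      rw [hG, ← lsub_id' d u]
      apply lsub_congr d _ _ n _ u (by omega)
      intro v hv
      rw [← hMd]
      exact lmul_congr (fun _ _ => rfl) (fun v' hv' => ih v' (by omega))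
  have hGd' : lsub H M = d := funext fun u => hGd (u.length + 1) u (by omega)
  have h2 : lmul (lsub (lone - lJ d H) M) d = lone := by
    have h := lsub_mul (lone - lJ d H) H M
    rw [hJ, lsub_one, hGd'] at h
    exact h.symm
  have h3 : lsub (lone - lJ d H) M = M := by
    have h := lmul_assoc (lsub (lone - lJ d H) M) d M
    rw [hdM, h2, one_lmul, lmul_one] at h
    exact h.symm
  apply lsub_inj hM0
  rw [h3, ← hM]
  exact (lT_self c).symm

end LA
section CB

def same (P : Finset (Finset ℕ)) (x y : ℕ) : Prop := ∃ B ∈ P, x ∈ B ∧ y ∈ B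

def IsP (s : Finset ℕ) (P : Finset (Finset ℕ)) : Prop :=
  (∀ B ∈ P, B.Nonempty) ∧ (∀ B ∈ P, B ⊆ s) ∧ (∀ x ∈ s, ∃ B ∈ P, x ∈ B) ∧
  (∀ B ∈ P, ∀ C ∈ P, ∀ x, x ∈ B → x ∈ C → B = C)

def ncr (P : Finset (Finset ℕ)) : Prop :=
  ∀ i j k l, i < j → j < k → k < l → same P i k → same P j l → same P i j

noncomputable def NCP (s : Finset ℕ) : Finset (Finset (Finset ℕ)) :=
  s.powerset.powerset.filter fun P => IsP s P ∧ ncr P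

theorem mem_NCP {s : Finset ℕ} {P : Finset (Finset ℕ)} : P ∈ NCP s ↔ IsP s P ∧ ncr P := by
  simp only [NCP, mem_filter, mem_powerset, and_iff_right_iff_imp]
  rintro ⟨h, -⟩ B hB
  exact mem_powerset.mpr (h.2.1 B hB)

theorem same_symm {P : Finset (Finset ℕ)} {x y : ℕ} (h : same P x y) : same P y x := by
  obtain ⟨B, hB, h1, h2⟩ := h; exact ⟨B, hB, h2, h1⟩

theorem IsP.trans {s : Finset ℕ} {P : Finset (Finset ℕ)} (hP : IsP s P) {x y z : ℕ}
    (h : same P x y) (h' : same P y z) : same P x z := by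
  obtain ⟨B, hB, h1, h2⟩ := h
  obtain ⟨C, hC, h3, h4⟩ := h'
  have := hP.2.2.2 B hB C hC y h2 h3
  subst this
  exact ⟨B, hB, h1, h4⟩

theorem IsP.refl {s : Finset ℕ} {P : Finset (Finset ℕ)} (hP : IsP s P) {x : ℕ} (h : x ∈ s) :
    same P x x := by
  obtain ⟨B, hB, h1⟩ := hP.2.2.1 x h; exact ⟨B, hB, h1, h1⟩

theorem IsP.mem {s : Finset ℕ} {P : Finset (Finset ℕ)} (hP : IsP s P) {x y : ℕ}
    (h : same P x y) : x ∈ s := by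
  obtain ⟨B, hB, h1, _⟩ := h; exact hP.2.1 B hB h1

theorem IsP.mem' {s : Finset ℕ} {P : Finset (Finset ℕ)} (hP : IsP s P) {x y : ℕ}
    (h : same P x y) : y ∈ s := hP.mem (same_symm h)

noncomputable def blk (P : Finset (Finset ℕ)) (x : ℕ) : Finset ℕ :=
  (P.filter fun B => x ∈ B).biUnion id

theorem mem_blk {P : Finset (Finset ℕ)} {x y : ℕ} : y ∈ blk P x ↔ same P x y := by
  simp [blk, same, and_assoc]

theorem IsP.blk_eq {s : Finset ℕ} {P : Finset (Finset ℕ)} (hP : IsP s P) {x : ℕ} {B : Finset ℕ}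
    (hB : B ∈ P) (hx : x ∈ B) : blk P x = B := by
  ext y
  rw [mem_blk]
  constructor
  · rintro ⟨C, hC, h1, h2⟩
    rwa [hP.2.2.2 B hB C hC x hx h1]
  · intro hy; exact ⟨B, hB, hx, hy⟩

theorem IsP.blk_mem {s : Finset ℕ} {P : Finset (Finset ℕ)} (hP : IsP s P) {x : ℕ}
    (hx : x ∈ s) : blk P x ∈ P := by
  obtain ⟨B, hB, h1⟩ := hP.2.2.1 x hx
  rwa [hP.blk_eq hB h1]

theorem IsP.blk_mem_iff {s : Finset ℕ} {P : Finset (Finset ℕ)} (hP : IsP s P) (B : Finset ℕ) :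
    B ∈ P ↔ ∃ x ∈ s, B = blk P x := by
  constructor
  · intro hB
    obtain ⟨x, hx⟩ := hP.1 B hB
    exact ⟨x, hP.2.1 B hB hx, (hP.blk_eq hB hx).symm⟩
  · rintro ⟨x, hx, rfl⟩; exact hP.blk_mem hx

theorem IsP.ext {s : Finset ℕ} {P Q : Finset (Finset ℕ)} (hP : IsP s P) (hQ : IsP s Q)
    (h : ∀ x y, same P x y ↔ same Q x y) : P = Q := by
  have hb : ∀ x, blk P x = blk Q x := by
    intro x; ext y; rw [mem_blk, mem_blk, h]
  ext B
  rw [hP.blk_mem_iff, hQ.blk_mem_iff]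
  simp [hb]

/-- restriction -/
noncomputable def restr (P : Finset (Finset ℕ)) (s : Finset ℕ) : Finset (Finset ℕ) :=
  (P.image fun B => B ∩ s).filter fun B => B.Nonempty

theorem same_restr {P : Finset (Finset ℕ)} {s : Finset ℕ} {x y : ℕ} :
    same (restr P s) x y ↔ x ∈ s ∧ y ∈ s ∧ same P x y := by
  constructor
  · rintro ⟨B, hB, h1, h2⟩
    simp only [restr, mem_filter, mem_image] at hB
    obtain ⟨⟨C, hC, rfl⟩, _⟩ := hB
    simp only [mem_inter] at h1 h2
    exact ⟨h1.2, h2.2, C, hC, h1.1, h2.1⟩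
  · rintro ⟨hx, hy, C, hC, h1, h2⟩
    refine ⟨C ∩ s, ?_, by simp [*], by simp [*]⟩
    simp only [restr, mem_filter, mem_image]
    exact ⟨⟨C, hC, rfl⟩, x, by simp [*]⟩

theorem restr_mem {P : Finset (Finset ℕ)} {s t : Finset ℕ} (hP : P ∈ NCP t) (hst : s ⊆ t) :
    restr P s ∈ NCP s := by
  rw [mem_NCP] at hP ⊢
  obtain ⟨hP, hn⟩ := hP
  refine ⟨⟨?_, ?_, ?_, ?_⟩, ?_⟩
  · intro B hB
    exact (mem_filter.mp hB).2
  · intro B hB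
    simp only [restr, mem_filter, mem_image] at hB
    obtain ⟨⟨C, hC, rfl⟩, _⟩ := hB
    exact inter_subset_right
  · intro x hx
    have := (same_restr (P := P) (s := s) (x := x) (y := x)).mpr ⟨hx, hx, hP.refl (hst hx)⟩
    obtain ⟨B, hB, h, _⟩ := this
    exact ⟨B, hB, h⟩
  · intro B hB C hC x hxB hxC
    simp only [restr, mem_filter, mem_image] at hB hC
    obtain ⟨⟨B', hB', rfl⟩, _⟩ := hB
    obtain ⟨⟨C', hC', rfl⟩, _⟩ := hC
    simp only [mem_inter] at hxB hxC
    rw [hP.2.2.2 B' hB' C' hC' x hxB.1 hxC.1]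
  · intro i j k l h1 h2 h3 h4 h5
    rw [same_restr] at *
    exact ⟨h4.1, h5.1, hn i j k l h1 h2 h3 h4.2.2 h5.2.2⟩

/-- gluing -/
noncomputable def glue (a b : ℕ) (P1 P2 : Finset (Finset ℕ)) : Finset (Finset ℕ) :=
  insert (insert a (blk P2 b)) (P1 ∪ P2.erase (blk P2 b))

theorem same_glue {a b n : ℕ} {P1 P2 : Finset (Finset ℕ)}
    (h2 : IsP (Ico b n) P2) {x y : ℕ} :
    same (glue a b P1 P2) x y ↔
      (x = a ∧ y = a) ∨ (x = a ∧ same P2 b y) ∨ (y = a ∧ same P2 b x) ∨ same P1 x y ∨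
        same P2 x y := by
  constructor
  · rintro ⟨B, hB, hx, hy⟩
    simp only [glue, mem_insert, mem_union, mem_erase] at hB
    rcases hB with rfl | hB | hB
    · simp only [mem_insert, mem_blk] at hx hy
      rcases hx with rfl | hx <;> rcases hy with rfl | hy
      · simp
      · simp [hy]
      · simp [hx]
      · exact Or.inr (Or.inr (Or.inr (Or.inr (h2.trans (same_symm hx) hy))))
    · exact Or.inr (Or.inr (Or.inr (Or.inl ⟨B, hB, hx, hy⟩)))
    · exact Or.inr (Or.inr (Or.inr (Or.inr ⟨B, hB.2, hx, hy⟩)))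
  · have h0 : insert a (blk P2 b) ∈ glue a b P1 P2 := by simp [glue]
    rintro (⟨rfl, rfl⟩ | ⟨rfl, h⟩ | ⟨rfl, h⟩ | ⟨B, hB, h⟩ | ⟨B, hB, h⟩)
    · exact ⟨_, h0, by simp, by simp⟩
    · exact ⟨_, h0, by simp, by simp [mem_blk, h]⟩
    · exact ⟨_, h0, by simp [mem_blk, h], by simp⟩
    · exact ⟨B, by simp [glue, hB], h⟩
    · by_cases hb : B = blk P2 b
      · subst hb
        exact ⟨_, h0, by simp [h.1], by simp [h.2]⟩
      · exact ⟨B, by simp [glue, hB, hb], h⟩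

theorem glue_isP {a b n : ℕ} {P1 P2 : Finset (Finset ℕ)} (hab : a < b) (hbn : b ≤ n)
    (h1 : IsP (Ioo a b) P1) (h2 : IsP (Ico b n) P2) : IsP (Ico a n) (glue a b P1 P2) := by
  have hb2 : ∀ x ∈ blk P2 b, b ≤ x ∧ x < n := by
    intro x hx
    rw [mem_blk] at hx
    exact mem_Ico.mp (h2.mem' hx)
  have e1 : ∀ B ∈ P1, ∀ x ∈ B, a < x ∧ x < b := fun B hB x hx => mem_Ioo.mp (h1.2.1 B hB hx)
  have e2 : ∀ B ∈ P2, ∀ x ∈ B, b ≤ x ∧ x < n := fun B hB x hx => mem_Ico.mp (h2.2.1 B hB hx)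
  have e3 : ∀ B ∈ P2, ∀ x ∈ B, x ∈ blk P2 b → B = blk P2 b := by
    intro B hB x hx hxb
    rw [mem_blk] at hxb
    obtain ⟨C, hC, hb, hxC⟩ := hxb
    rw [h2.blk_eq hC hb]
    exact h2.2.2.2 B hB C hC x hx hxC
  refine ⟨?_, ?_, ?_, ?_⟩
  · intro B hB
    simp only [glue, mem_insert, mem_union, mem_erase] at hB
    rcases hB with rfl | hB | hB
    · exact ⟨a, by simp⟩
    · exact h1.1 B hB
    · exact h2.1 B hB.2
  · intro B hB x hx
    simp only [glue, mem_insert, mem_union, mem_erase] at hB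
    rw [mem_Ico]
    rcases hB with rfl | hB | hB
    · rw [mem_insert] at hx
      rcases hx with rfl | hx
      · omega
      · have := hb2 x hx; omega
    · have := e1 B hB x hx; omega
    · have := e2 B hB.2 x hx; omega
  · intro x hx
    rw [mem_Ico] at hx
    have : same (glue a b P1 P2) x x := by
      rw [same_glue h2]
      by_cases h : x = a
      · simp [h]
      · by_cases h' : x < b
        · exact Or.inr (Or.inr (Or.inr (Or.inl (h1.refl (mem_Ioo.mpr (by omega))))))
        · exact Or.inr (Or.inr (Or.inr (Or.inr (h2.refl (mem_Ico.mpr (by omega))))))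
    obtain ⟨B, hB, h, _⟩ := this
    exact ⟨B, hB, h⟩
  · intro B hB C hC x hxB hxC
    simp only [glue, mem_insert, mem_union, mem_erase] at hB hC
    rcases hB with rfl | hB | hB <;> rcases hC with rfl | hC | hC
    · rfl
    · have h3 := e1 C hC x hxC
      rw [mem_insert] at hxB
      rcases hxB with rfl | hxB
      · omega
      · have := hb2 x hxB; omega
    · have h3 := e2 C hC.2 x hxC
      rw [mem_insert] at hxB
      rcases hxB with rfl | hxB
      · omega
      · exact absurd (e3 C hC.2 x hxC hxB) hC.1
    · have h3 := e1 B hB x hxB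
      rw [mem_insert] at hxC
      rcases hxC with rfl | hxC
      · omega
      · have := hb2 x hxC; omega
    · exact h1.2.2.2 B hB C hC x hxB hxC
    · have h3 := e1 B hB x hxB
      have h4 := e2 C hC.2 x hxC
      omega
    · have h3 := e2 B hB.2 x hxB
      rw [mem_insert] at hxC
      rcases hxC with rfl | hxC
      · omega
      · exact absurd (e3 B hB.2 x hxB hxC) hB.1
    · have h3 := e1 C hC x hxC
      have h4 := e2 B hB.2 x hxB
      omega
    · exact h2.2.2.2 B hB.2 C hC.2 x hxB hxC

theorem IsP.bd {b n : ℕ} {P : Finset (Finset ℕ)} (hP : IsP (Ico b n) P) {x y : ℕ}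
    (h : same P x y) : b ≤ x ∧ x < n ∧ b ≤ y ∧ y < n := by
  have h1 := mem_Ico.mp (hP.mem h)
  have h2 := mem_Ico.mp (hP.mem' h)
  exact ⟨h1.1, h1.2, h2.1, h2.2⟩

theorem IsP.bd' {b n : ℕ} {P : Finset (Finset ℕ)} (hP : IsP (Ioo b n) P) {x y : ℕ}
    (h : same P x y) : b < x ∧ x < n ∧ b < y ∧ y < n := by
  have h1 := mem_Ioo.mp (hP.mem h)
  have h2 := mem_Ioo.mp (hP.mem' h)
  exact ⟨h1.1, h1.2, h2.1, h2.2⟩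

theorem glue_mem {a b n : ℕ} {P1 P2 : Finset (Finset ℕ)} (hab : a < b) (hbn : b ≤ n)
    (h1 : P1 ∈ NCP (Ioo a b)) (h2 : P2 ∈ NCP (Ico b n)) : glue a b P1 P2 ∈ NCP (Ico a n) := by
  rw [mem_NCP] at *
  obtain ⟨h1, n1⟩ := h1
  obtain ⟨h2, n2⟩ := h2
  refine ⟨glue_isP hab hbn h1 h2, ?_⟩
  intro i j k l hij hjk hkl hik hjl
  rw [same_glue h2] at *
  have b1 : ∀ x y, same P1 x y → a < x ∧ x < b ∧ a < y ∧ y < b := fun x y h => h1.bd' h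
  have b2 : ∀ x y, same P2 x y → b ≤ x ∧ x < n ∧ b ≤ y ∧ y < n := fun x y h => h2.bd h
  rcases hik with ⟨h, h'⟩ | ⟨h, h'⟩ | ⟨h, h'⟩ | h | h <;>
  rcases hjl with ⟨k1, k2⟩ | ⟨k1, k2⟩ | ⟨k1, k2⟩ | k1 | k1 <;>
  first
  | omega
  | (have := b2 _ _ h'; omega)
  | (have := b2 _ _ k2; omega)
  | (have := b1 _ _ h; omega)
  | (have := b2 _ _ h; omega)
  | (have := b2 _ _ h'; have := b1 _ _ k1; omega)
  | (have := b2 _ _ h; have := b1 _ _ k1; omega)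
  | (have := b1 _ _ h; have := b1 _ _ k1; omega)
  | (have := b1 _ _ h; have := b2 _ _ k1; omega)
  | skip
  · -- i = a, b ~ k, j ~ l in P2
    refine Or.inr (Or.inl ⟨h, ?_⟩)
    have hj := b2 _ _ k1
    by_cases hbj : b = j
    · subst hbj; exact h2.refl (mem_Ico.mpr (by omega))
    · exact n2 b j k l (by omega) hjk hkl h' k1
  · exact Or.inr (Or.inr (Or.inr (Or.inl (n1 i j k l hij hjk hkl h k1))))
  · exact Or.inr (Or.inr (Or.inr (Or.inr (n2 i j k l hij hjk hkl h k1))))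

theorem glue_b {a b n b' : ℕ} {P1 P2 P1' P2' : Finset (Finset ℕ)} (hab : a < b) (hbn : b ≤ n)
    (hbn' : b' ≤ n) (h1' : IsP (Ioo a b') P1') (h2 : IsP (Ico b n) P2) (h2' : IsP (Ico b' n) P2')
    (h : glue a b P1 P2 = glue a b' P1' P2') : b' ≤ b := by
  by_contra hlt
  have : same (glue a b P1 P2) a b := by
    rw [same_glue h2]
    exact Or.inr (Or.inl ⟨rfl, h2.refl (mem_Ico.mpr (by omega))⟩)
  rw [h, same_glue h2'] at this
  rcases this with ⟨_, h⟩ | ⟨_, h⟩ | ⟨h, _⟩ | h | h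
  · omega
  · have := h2'.bd h; omega
  · omega
  · have := h1'.bd' h; omega
  · have := h2'.bd h; omega

theorem glue_inj1 {a b n : ℕ} {P1 P2 : Finset (Finset ℕ)} (hab : a < b) (hbn : b ≤ n)
    (h1 : P1 ∈ NCP (Ioo a b)) (h2 : P2 ∈ NCP (Ico b n)) :
    restr (glue a b P1 P2) (Ioo a b) = P1 := by
  have hm := glue_mem hab hbn h1 h2
  have hr := restr_mem hm (s := Ioo a b) (by intro x hx; rw [mem_Ioo] at hx; rw [mem_Ico]; omega)
  rw [mem_NCP] at *
  refine hr.1.ext h1.1 fun x y => ?_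
  rw [same_restr, same_glue h2.1, mem_Ioo, mem_Ioo]
  constructor
  · rintro ⟨hx, hy, ⟨h, _⟩ | ⟨h, _⟩ | ⟨h, _⟩ | h | h⟩
    · omega
    · omega
    · omega
    · exact h
    · have := h2.1.bd h; omega
  · intro h
    have := h1.1.bd' h
    exact ⟨by omega, by omega, by simp [h]⟩

theorem glue_inj2 {a b n : ℕ} {P1 P2 : Finset (Finset ℕ)} (hab : a < b) (hbn : b ≤ n)
    (h1 : P1 ∈ NCP (Ioo a b)) (h2 : P2 ∈ NCP (Ico b n)) :
    restr (glue a b P1 P2) (Ico b n) = P2 := by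
  have hm := glue_mem hab hbn h1 h2
  have hr := restr_mem hm (s := Ico b n) (by intro x hx; rw [mem_Ico] at *; omega)
  rw [mem_NCP] at *
  refine hr.1.ext h2.1 fun x y => ?_
  rw [same_restr, same_glue h2.1, mem_Ico, mem_Ico]
  constructor
  · rintro ⟨hx, hy, ⟨h, _⟩ | ⟨h, _⟩ | ⟨h, _⟩ | h | h⟩
    · omega
    · omega
    · omega
    · have := h1.1.bd' h; omega
    · exact h
  · intro h
    have := h2.1.bd h
    exact ⟨by omega, by omega, by simp [h]⟩

theorem glue_surj {a n : ℕ} {P : Finset (Finset ℕ)} (han : a < n) (hP : P ∈ NCP (Ico a n)) :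
    ∃ b, a < b ∧ b ≤ n ∧ glue a b (restr P (Ioo a b)) (restr P (Ico b n)) = P := by
  have hex : ∃ b, a < b ∧ (b = n ∨ same P a b) := ⟨n, han, Or.inl rfl⟩
  obtain ⟨hb1, hb2⟩ := Nat.find_spec hex
  have hmin : ∀ m, m < Nat.find hex → ¬ (a < m ∧ (m = n ∨ same P a m)) :=
    fun m hm => Nat.find_min hex hm
  have hbn : Nat.find hex ≤ n := Nat.find_min' hex ⟨han, Or.inl rfl⟩
  generalize Nat.find hex = b at *
  refine ⟨b, hb1, hbn, ?_⟩
  have r1 := restr_mem hP (s := Ioo a b) (by intro x hx; rw [mem_Ioo] at hx; rw [mem_Ico]; omega)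
  have r2 := restr_mem hP (s := Ico b n) (by intro x hx; rw [mem_Ico] at *; omega)
  have hm := glue_mem hb1 hbn r1 r2
  rw [mem_NCP] at *
  have bd : ∀ x y, same P x y → a ≤ x ∧ x < n ∧ a ≤ y ∧ y < n := fun x y h => hP.1.bd h
  refine hm.1.ext hP.1 fun x y => ?_
  rw [same_glue r2.1]
  simp only [same_restr, mem_Ioo, mem_Ico]
  have hab : b < n → same P a b := fun h => hb2.resolve_left (by omega)
  have key : ∀ x y, same P x y → a < x → x < b → b ≤ y → False := by
    intro x y h hx hxb hy
    have hh := bd _ _ h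
    have hab' := hab (by omega)
    rcases Nat.eq_or_lt_of_le hy with rfl | hy
    · exact hmin x hxb ⟨hx, Or.inr (hP.1.trans hab' (same_symm h))⟩
    · exact hmin x hxb ⟨hx, Or.inr (hP.2 a x b y hx hxb hy hab' h)⟩
  constructor
  · rintro (⟨rfl, rfl⟩ | ⟨rfl, h⟩ | ⟨rfl, h⟩ | h | h)
    · exact hP.1.refl (mem_Ico.mpr (by omega))
    · exact hP.1.trans (hab (by omega)) h.2.2
    · exact same_symm (hP.1.trans (hab (by omega)) h.2.2)
    · exact h.2.2
    · exact h.2.2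
  · intro h
    have hh := bd _ _ h
    -- elements related to a are ≥ b or equal to a
    have ha : ∀ z, same P a z → z = a ∨ b ≤ z := by
      intro z hz
      have := bd _ _ hz
      by_contra hc
      exact hmin z (by omega) ⟨by omega, Or.inr hz⟩
    by_cases hx : x = a
    · subst hx
      rcases ha y h with rfl | hy
      · simp
      · exact Or.inr (Or.inl ⟨rfl, by omega, by omega,
          hP.1.trans (same_symm (hab (by omega))) h⟩)
    by_cases hy : y = a
    · subst hy
      rcases ha x (same_symm h) with rfl | hx'
      · simp
      · exact Or.inr (Or.inr (Or.inl ⟨rfl, by omega, by omega,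
          hP.1.trans (same_symm (hab (by omega))) (same_symm h)⟩))
    by_cases hxb : x < b
    · by_cases hyb : y < b
      · exact Or.inr (Or.inr (Or.inr (Or.inl ⟨by omega, by omega, h⟩)))
      · exact (key x y h (by omega) hxb (by omega)).elim
    · by_cases hyb : y < b
      · exact (key y x (same_symm h) (by omega) hyb (by omega)).elim
      · exact Or.inr (Or.inr (Or.inr (Or.inr ⟨by omega, by omega, h⟩)))

theorem sum_glue {a n : ℕ} (han : a < n) (φ : Finset (Finset ℕ) → ℂ) :
    ∑ P ∈ NCP (Ico a n), φ P =
      ∑ b ∈ Ioc a n, ∑ P1 ∈ NCP (Ioo a b), ∑ P2 ∈ NCP (Ico b n), φ (glue a b P1 P2) := by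
  simp only [← Finset.sum_product']
  rw [Finset.sum_sigma']
  symm
  refine Finset.sum_bij (fun x _ => glue a x.1 x.2.1 x.2.2) ?_ ?_ ?_ ?_
  · rintro ⟨b, P1, P2⟩ h
    simp only [mem_sigma, mem_product, mem_Ioc] at h
    exact glue_mem h.1.1 h.1.2 h.2.1 h.2.2
  · rintro ⟨b, P1, P2⟩ h ⟨b', P1', P2'⟩ h' heq
    simp only [mem_sigma, mem_product, mem_Ioc] at h h' heq
    have i1 := (mem_NCP.mp h.2.1).1
    have i2 := (mem_NCP.mp h.2.2).1
    have i1' := (mem_NCP.mp h'.2.1).1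
    have i2' := (mem_NCP.mp h'.2.2).1
    have hb : b = b' := le_antisymm
      (glue_b h'.1.1 h'.1.2 h.1.2 i1 i2' i2 heq.symm) (glue_b h.1.1 h.1.2 h'.1.2 i1' i2 i2' heq)
    subst hb
    have e1 := glue_inj1 h.1.1 h.1.2 h.2.1 h.2.2
    have e1' := glue_inj1 h'.1.1 h'.1.2 h'.2.1 h'.2.2
    have e2 := glue_inj2 h.1.1 h.1.2 h.2.1 h.2.2
    have e2' := glue_inj2 h'.1.1 h'.1.2 h'.2.1 h'.2.2
    rw [heq] at e1 e2
    rw [← e1, ← e2, e1', e2']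
  · intro P hP
    obtain ⟨b, h1, h2, h3⟩ := glue_surj han hP
    refine ⟨⟨b, restr P (Ioo a b), restr P (Ico b n)⟩, ?_, h3⟩
    simp only [mem_sigma, mem_product, mem_Ioc]
    exact ⟨⟨h1, h2⟩, restr_mem hP (by intro x hx; rw [mem_Ioo] at hx; rw [mem_Ico]; omega),
      restr_mem hP (by intro x hx; rw [mem_Ico] at *; omega)⟩
  · intros; rfl

end CB
section CC
variable {α : Type}

noncomputable def wd (W : ℕ → α) (B : Finset ℕ) : List α := (B.sort (· ≤ ·)).map W

def wdI (W : ℕ → α) (a n : ℕ) : List α := (List.range' a (n - a)).map W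

theorem wdI_self (W : ℕ → α) (a : ℕ) : wdI W a a = [] := by simp [wdI]

theorem wdI_length (W : ℕ → α) (a n : ℕ) : (wdI W a n).length = n - a := by simp [wdI]

theorem wdI_cons (W : ℕ → α) {a n : ℕ} (h : a < n) : wdI W a n = W a :: wdI W (a+1) n := by
  unfold wdI
  obtain ⟨m, rfl⟩ : ∃ m, n = a + 1 + m := ⟨n - a - 1, by omega⟩
  rw [show a + 1 + m - a = m + 1 by omega, show a + 1 + m - (a + 1) = m by omega]
  simp [List.range'_succ]

theorem wdI_take (W : ℕ → α) {a n i : ℕ} (h : a + i ≤ n) :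
    (wdI W a n).take i = wdI W a (a + i) := by
  unfold wdI
  rw [← List.map_take]
  congr 1
  apply List.ext_getElem
  · simp; omega
  · intro j h1 h2
    simp

theorem wdI_drop (W : ℕ → α) {a n i : ℕ} :
    (wdI W a n).drop i = wdI W (a + i) n := by
  unfold wdI
  rw [← List.map_drop, List.drop_range']
  congr 2 <;> omega

noncomputable def wt (c : List α → ℂ) (W : ℕ → α) (P : Finset (Finset ℕ)) : ℂ :=
  ∏ B ∈ P, c (wd W B)

noncomputable def wF (F c : List α → ℂ) (W : ℕ → α) (a : ℕ) (P : Finset (Finset ℕ)) : ℂ :=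
  F (wd W (blk P a)) * ∏ B ∈ P.erase (blk P a), c (wd W B)

theorem Ioo_Ico (a b : ℕ) : Ioo a b = Ico (a+1) b := by
  ext x; simp only [mem_Ioo, mem_Ico]; omega

theorem IsP_empty {P : Finset (Finset ℕ)} (h : IsP ∅ P) : P = ∅ := by
  rw [Finset.eq_empty_iff_forall_notMem]
  intro B hB
  obtain ⟨x, hx⟩ := h.1 B hB
  exact absurd (h.2.1 B hB hx) (by simp)

theorem NCP_empty : NCP ∅ = {∅} := by
  ext P
  rw [mem_NCP, mem_singleton]
  constructor
  · intro h; exact IsP_empty h.1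
  · rintro rfl
    refine ⟨⟨?_, ?_, ?_, ?_⟩, ?_⟩ <;> simp [ncr, same]

theorem blk_empty (a : ℕ) : blk ∅ a = ∅ := by simp [blk]

theorem wF_empty (F c : List α → ℂ) (W : ℕ → α) (a : ℕ) : wF F c W a ∅ = F [] := by
  simp [wF, blk_empty, wd]

theorem wF_self (c : List α → ℂ) (hc : c [] = 1) (W : ℕ → α) {a n : ℕ}
    {P : Finset (Finset ℕ)} (hP : P ∈ NCP (Ico a n)) : wF c c W a P = wt c W P := by
  rw [mem_NCP] at hP
  by_cases h : a < n
  · exact Finset.mul_prod_erase P (fun B => c (wd W B))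
      (hP.1.blk_mem (mem_Ico.mpr (by omega)))
  · rw [Finset.Ico_eq_empty h] at hP
    rw [IsP_empty hP.1, wF_empty, hc]; simp [wt]

theorem wF_glue (F c : List α → ℂ) (W : ℕ → α) {a b n : ℕ} {P1 P2 : Finset (Finset ℕ)}
    (hab : a < b) (hbn : b ≤ n)
    (h1 : P1 ∈ NCP (Ioo a b)) (h2 : P2 ∈ NCP (Ico b n)) :
    wF F c W a (glue a b P1 P2) = wt c W P1 * wF (dv F (W a)) c W b P2 := by
  rw [mem_NCP] at h1 h2
  have hg := glue_isP hab hbn h1.1 h2.1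
  have hb : blk (glue a b P1 P2) a = insert a (blk P2 b) :=
    hg.blk_eq (by simp [glue]) (by simp)
  have hlt : ∀ x ∈ blk P2 b, a < x := by
    intro x hx
    have := h2.1.bd (mem_blk.mp hx)
    omega
  have hw : wd W (insert a (blk P2 b)) = W a :: wd W (blk P2 b) := by
    unfold wd
    rw [Finset.sort_insert _ (fun x hx => (hlt x hx).le) (fun h => lt_irrefl _ (hlt a h))]
    rfl
  have hn : insert a (blk P2 b) ∉ P1 ∪ P2.erase (blk P2 b) := by
    intro h
    rw [mem_union, mem_erase] at h
    rcases h with h | h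
    · have := mem_Ioo.mp (h1.1.2.1 _ h (mem_insert_self a _)); omega
    · have := mem_Ico.mp (h2.1.2.1 _ h.2 (mem_insert_self a _)); omega
  have hd : Disjoint P1 (P2.erase (blk P2 b)) := by
    rw [Finset.disjoint_left]
    intro B hB hB'
    obtain ⟨x, hx⟩ := h1.1.1 B hB
    have := mem_Ioo.mp (h1.1.2.1 B hB hx)
    have := mem_Ico.mp (h2.1.2.1 B (mem_of_mem_erase hB') hx)
    omega
  unfold wF
  rw [hb, hw]
  unfold glue
  rw [Finset.erase_insert hn, Finset.prod_union hd]
  simp only [wt, dv]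
  ring

theorem sum_Ioc_range {a n : ℕ} (h : a < n) (G : ℕ → ℂ) :
    ∑ b ∈ Ioc a n, G b = ∑ i ∈ range (n - (a+1) + 1), G (a + 1 + i) := by
  have : Ioc a n = Ico (a+1) (n+1) := by
    ext x; simp only [mem_Ioc, mem_Ico]; omega
  rw [this, Finset.sum_Ico_eq_sum_range]
  congr 2; omega

/-- all non-crossing partitions -/
theorem sum_T (c : List α → ℂ) (hc : c [] = 1) (W : ℕ → α) (m : ℕ) : ∀ (F : List α → ℂ) (a n : ℕ),
    a ≤ n → n - a ≤ m → ∑ P ∈ NCP (Ico a n), wF F c W a P = lT c F (wdI W a n) := by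
  induction m with
  | zero =>
    intro F a n h h'
    obtain rfl : a = n := by omega
    rw [Finset.Ico_self, NCP_empty, sum_singleton, wF_empty, wdI_self, lT_nil]
  | succ m ih =>
    intro F a n h h'
    rcases Nat.eq_or_lt_of_le h with rfl | h
    · rw [Finset.Ico_self, NCP_empty, sum_singleton, wF_empty, wdI_self, lT_nil]
    rw [sum_glue h, sum_Ioc_range h, wdI_cons W h, lT, wdI_length]
    refine Finset.sum_congr rfl fun i hi => ?_
    rw [mem_range] at hi
    rw [wdI_take W (by omega), wdI_drop, ← ih c (a+1) (a+1+i) (by omega) (by omega),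
      ← ih (dv F (W a)) (a+1+i) n (by omega) (by omega), Finset.sum_mul_sum]
    rw [Ioo_Ico]
    refine Finset.sum_congr rfl fun P1 h1 => Finset.sum_congr rfl fun P2 h2 => ?_
    rw [wF_self c hc W h1, wF_glue F c W (by omega) (by omega) (by rwa [Ioo_Ico]) h2]

theorem sum_T' (c : List α → ℂ) (hc : c [] = 1) (W : ℕ → α) (a n : ℕ) (h : a ≤ n) :
    ∑ P ∈ NCP (Ico a n), wt c W P = lT c c (wdI W a n) := by
  rw [← sum_T c hc W _ c a n h le_rfl]
  exact Finset.sum_congr rfl fun P hP => (wF_self c hc W hP).symm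

/-- irreducible ones -/
theorem sum_J (c : List α → ℂ) (hc : c [] = 1) (W : ℕ → α) (m : ℕ) : ∀ (F : List α → ℂ) (a n : ℕ),
    a ≤ n → n - a ≤ m → ∑ P ∈ NCP (Ico a n), (if same P a (n-1) then wF F c W a P else 0)
      = lJ F (lT c c) (wdI W a n) := by
  have h0 : ∀ (F : List α → ℂ) (a : ℕ), ∑ P ∈ NCP (Ico a a),
      (if same P a (a-1) then wF F c W a P else 0) = lJ F (lT c c) (wdI W a a) := by
    intro F a
    rw [Finset.Ico_self, NCP_empty, sum_singleton, wdI_self, lJ_nil]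
    simp [same]
  induction m with
  | zero =>
    intro F a n h h'
    obtain rfl : a = n := by omega
    exact h0 F a
  | succ m ih =>
    intro F a n h h'
    rcases Nat.eq_or_lt_of_le h with rfl | h
    · exact h0 F a
    rw [sum_glue h, sum_Ioc_range h, wdI_cons W h, lJ, wdI_length]
    by_cases hn : a + 1 = n
    · subst hn
      simp only [Nat.sub_self, zero_add, range_one, sum_singleton, add_zero]
      rw [Ioo_Ico, Finset.Ico_self, NCP_empty, sum_singleton, sum_singleton, wdI_self]
      have hm : (∅ : Finset (Finset ℕ)) ∈ NCP ∅ := by simp [NCP_empty]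
      rw [wF_glue F c W (n := a + 1) (by omega) le_rfl (by rwa [Ioo_Ico, Finset.Ico_self])
        (by rwa [Finset.Ico_self]), wF_empty, if_pos]
      · simp [wt, dv, lJ_nil]
      · refine ⟨insert a (blk ∅ (a+1)), by simp [glue], by simp, by simp⟩
    · have hne : wdI W (a+1) n ≠ [] := by
        intro hh
        have := congrArg List.length hh
        rw [wdI_length] at this
        simp at this; omega
      rw [if_neg hne, zero_add]
      refine Finset.sum_congr rfl fun i hi => ?_
      rw [mem_range] at hi
      rw [wdI_take W (by omega), wdI_drop, ← sum_T' c hc W (a+1) (a+1+i) (by omega),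
        ← ih (dv F (W a)) (a+1+i) n (by omega) (by omega), Finset.sum_mul_sum]
      rw [Ioo_Ico]
      refine Finset.sum_congr rfl fun P1 h1 => Finset.sum_congr rfl fun P2 h2 => ?_
      have i1 := (mem_NCP.mp h1).1
      have i2 := (mem_NCP.mp h2).1
      rw [wF_glue F c W (by omega) (by omega) (by rwa [Ioo_Ico]) h2]
      have : same (glue a (a+1+i) P1 P2) a (n-1) ↔ same P2 (a+1+i) (n-1) := by
        rw [same_glue i2]
        constructor
        · rintro (⟨_, hh⟩ | ⟨_, hh⟩ | ⟨hh, _⟩ | hh | hh)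
          · omega
          · exact hh
          · omega
          · have := i1.bd hh; omega
          · have := i2.bd hh; omega
        · intro hh; exact Or.inr (Or.inl ⟨rfl, hh⟩)
      simp only [this]
      split_ifs <;> simp

def cvx (P : Finset (Finset ℕ)) : Prop :=
  ∀ x y z, x ≤ y → y ≤ z → same P x z → same P x y

theorem cvx_empty : cvx ∅ := by
  intro x y z _ _ h
  simp [same] at h

theorem cvx_glue {a b n : ℕ} {P1 P2 : Finset (Finset ℕ)} (hab : a < b) (hbn : b ≤ n)
    (h1 : P1 ∈ NCP (Ioo a b)) (h2 : P2 ∈ NCP (Ico b n)) :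
    cvx (glue a b P1 P2) ↔ (b = n ∧ cvx P1) ∨ (b = a + 1 ∧ cvx P2) := by
  have i1 := (mem_NCP.mp h1).1
  have i2 := (mem_NCP.mp h2).1
  constructor
  · intro h
    have c1 : cvx P1 := by
      intro x y z hx hy hs
      have hb := i1.bd' hs
      have := h x y z hx hy (by rw [same_glue i2]; simp [hs])
      rw [same_glue i2] at this
      rcases this with ⟨hh, _⟩ | ⟨hh, _⟩ | ⟨hh, _⟩ | hh | hh
      · omega
      · omega
      · omega
      · exact hh
      · have := i2.bd hh; omega
    have c2 : cvx P2 := by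
      intro x y z hx hy hs
      have hb := i2.bd hs
      have := h x y z hx hy (by rw [same_glue i2]; simp [hs])
      rw [same_glue i2] at this
      rcases this with ⟨hh, _⟩ | ⟨hh, _⟩ | ⟨hh, _⟩ | hh | hh
      · omega
      · omega
      · omega
      · have := i1.bd' hh; omega
      · exact hh
    by_cases hbn' : b = n
    · exact Or.inl ⟨hbn', c1⟩
    · refine Or.inr ⟨?_, c2⟩
      by_contra hne
      have := h a (a+1) b (by omega) (by omega) (by
        rw [same_glue i2]
        exact Or.inr (Or.inl ⟨rfl, i2.refl (mem_Ico.mpr (by omega))⟩))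
      rw [same_glue i2] at this
      rcases this with ⟨_, hh⟩ | ⟨_, hh⟩ | ⟨hh, _⟩ | hh | hh
      · omega
      · have := i2.bd hh; omega
      · omega
      · have := i1.bd' hh; omega
      · have := i2.bd hh; omega
  · rintro (⟨rfl, hc⟩ | ⟨rfl, hc⟩)
    · intro x y z hx hy hs
      rw [same_glue i2] at *
      rcases hs with ⟨hh, _⟩ | ⟨_, hh⟩ | ⟨_, hh⟩ | hh | hh
      · exact Or.inl ⟨hh, by omega⟩
      · have := i2.bd hh; omega
      · have := i2.bd hh; omega
      · exact Or.inr (Or.inr (Or.inr (Or.inl (hc x y z hx hy hh))))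
      · have := i2.bd hh; omega
    · intro x y z hx hy hs
      rw [same_glue i2] at *
      rcases hs with ⟨hh, _⟩ | ⟨hh, h'⟩ | ⟨_, hh⟩ | hh | hh
      · exact Or.inl ⟨hh, by omega⟩
      · by_cases hya : y = a
        · exact Or.inl ⟨hh, hya⟩
        · exact Or.inr (Or.inl ⟨hh, hc (a+1) y z (by omega) hy h'⟩)
      · have := i2.bd hh; omega
      · have := i1.bd' hh; omega
      · exact Or.inr (Or.inr (Or.inr (Or.inr (hc x y z hx hy hh))))

/-- interval partitions -/
theorem sum_K (c : List α → ℂ) (hc : c [] = 1) (W : ℕ → α) (m : ℕ) : ∀ (F : List α → ℂ) (a n : ℕ),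
    a ≤ n → n - a ≤ m → ∑ P ∈ NCP (Ico a n), (if cvx P then wF F c W a P else 0)
      = lK c F (wdI W a n) := by
  have h0 : ∀ (F : List α → ℂ) (a : ℕ), ∑ P ∈ NCP (Ico a a),
      (if cvx P then wF F c W a P else 0) = lK c F (wdI W a a) := by
    intro F a
    rw [Finset.Ico_self, NCP_empty, sum_singleton, wdI_self, lK_nil, if_pos cvx_empty, wF_empty]
  induction m with
  | zero =>
    intro F a n h h'
    obtain rfl : a = n := by omega
    exact h0 F a
  | succ m ih =>
    intro F a n h h'
    rcases Nat.eq_or_lt_of_le h with rfl | h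
    · exact h0 F a
    have e0 : (∅ : Finset (Finset ℕ)) ∈ NCP ∅ := by simp [NCP_empty]
    have step : ∀ b ∈ Ioc a n, ∑ P1 ∈ NCP (Ioo a b), ∑ P2 ∈ NCP (Ico b n),
        (if cvx (glue a b P1 P2) then wF F c W a (glue a b P1 P2) else 0) =
        (if b = a + 1 then lK c (dv F (W a)) (wdI W (a+1) n) else 0) +
        (if b = n then (if a + 1 = n then 0 else F [W a] * lK c c (wdI W (a+1) n)) else 0) := by
      intro b hb
      rw [mem_Ioc] at hb
      by_cases hb1 : b = a + 1
      · subst hb1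
        rw [if_pos rfl, ← ih (dv F (W a)) (a+1) n (by omega) (by omega)]
        have hE : Ioo a (a+1) = ∅ := by rw [Ioo_Ico, Finset.Ico_self]
        have hz : (if a + 1 = n then (if a + 1 = n then (0:ℂ) else
            F [W a] * lK c c (wdI W (a+1) n)) else 0) = 0 := by split_ifs <;> rfl
        rw [hz, add_zero, hE, NCP_empty, sum_singleton]
        refine Finset.sum_congr rfl fun P2 h2 => ?_
        have h1 : (∅ : Finset (Finset ℕ)) ∈ NCP (Ioo a (a+1)) := by rwa [hE]
        rw [wF_glue F c W (by omega) (by omega) h1 h2]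
        have : cvx (glue a (a+1) ∅ P2) ↔ cvx P2 := by
          rw [cvx_glue (by omega) (by omega) h1 h2]
          constructor
          · rintro (⟨rfl, _⟩ | ⟨_, h⟩)
            · rw [Finset.Ico_self, NCP_empty, mem_singleton] at h2
              rw [h2]; exact cvx_empty
            · exact h
          · intro h; exact Or.inr ⟨rfl, h⟩
        simp only [this]
        simp [wt]
      · rw [if_neg hb1, zero_add]
        by_cases hbn : b = n
        · subst hbn
          rw [if_pos rfl, if_neg (by omega), ← ih c (a+1) b (by omega) (by omega),
            Finset.mul_sum, Finset.Ico_self, NCP_empty, Ioo_Ico]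
          refine Finset.sum_congr rfl fun P1 h1 => ?_
          rw [sum_singleton, wF_self c hc W h1]
          have h2 : (∅ : Finset (Finset ℕ)) ∈ NCP (Ico b b) := by rwa [Finset.Ico_self]
          rw [wF_glue F c W hb.1 le_rfl (by rwa [Ioo_Ico]) h2, wF_empty]
          have : cvx (glue a b P1 ∅) ↔ cvx P1 := by
            rw [cvx_glue hb.1 le_rfl (by rwa [Ioo_Ico]) h2]
            simp [hb1]
          simp only [this]
          split_ifs
          · simp [dv]; ring
          · simp
        · rw [if_neg hbn]
          refine Finset.sum_eq_zero fun P1 h1 => Finset.sum_eq_zero fun P2 h2 => ?_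
          rw [if_neg]
          rw [cvx_glue hb.1 hb.2 h1 h2]
          simp [hb1, hbn]
    rw [sum_glue h, Finset.sum_congr rfl step, Finset.sum_add_distrib, Finset.sum_ite_eq',
      Finset.sum_ite_eq', if_pos (mem_Ioc.mpr (by omega)), if_pos (mem_Ioc.mpr (by omega)),
      wdI_cons W h, lK]
    congr 1
    have : wdI W (a+1) n = [] ↔ a + 1 = n := by
      rw [← List.length_eq_zero_iff, wdI_length]; omega
    simp only [this]

theorem sum_K' (c : List α → ℂ) (hc : c [] = 1) (W : ℕ → α) (a n : ℕ) (h : a ≤ n) :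
    ∑ P ∈ NCP (Ico a n), (if cvx P then wt c W P else 0) = lK c c (wdI W a n) := by
  rw [← sum_K c hc W _ c a n h le_rfl]
  refine Finset.sum_congr rfl fun P hP => ?_
  rw [wF_self c hc W hP]

theorem sum_J' (c : List α → ℂ) (hc : c [] = 1) (W : ℕ → α) (a n : ℕ) (h : a ≤ n) :
    ∑ P ∈ NCP (Ico a n), (if same P a (n-1) then wt c W P else 0)
      = lJ c (lT c c) (wdI W a n) := by
  rw [← sum_J c hc W _ c a n h le_rfl]
  refine Finset.sum_congr rfl fun P hP => ?_
  rw [wF_self c hc W hP]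

end CC
section DD

noncomputable def toP {m : ℕ} (π : FP m) : Finset (Finset ℕ) :=
  π.parts.map (Finset.mapEmbedding Fin.valEmbedding).toEmbedding

theorem mem_toP {m : ℕ} {π : FP m} {C : Finset ℕ} :
    C ∈ toP π ↔ ∃ B ∈ π.parts, B.map Fin.valEmbedding = C := by
  simp [toP]

theorem same_toP {m : ℕ} {π : FP m} {x y : ℕ} :
    same (toP π) x y ↔ ∃ i j : Fin m, i.val = x ∧ j.val = y ∧ SameBlock π i j := by
  constructor
  · rintro ⟨C, hC, hx, hy⟩
    obtain ⟨B, hB, rfl⟩ := mem_toP.mp hC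
    rw [mem_map] at hx hy
    obtain ⟨i, hi, rfl⟩ := hx
    obtain ⟨j, hj, rfl⟩ := hy
    exact ⟨i, j, rfl, rfl, B, hB, hi, hj⟩
  · rintro ⟨i, j, rfl, rfl, B, hB, hi, hj⟩
    exact ⟨_, mem_toP.mpr ⟨B, hB, rfl⟩, mem_map.mpr ⟨i, hi, rfl⟩, mem_map.mpr ⟨j, hj, rfl⟩⟩

theorem same_toP' {m : ℕ} {π : FP m} {i j : Fin m} :
    same (toP π) i j ↔ SameBlock π i j := by
  rw [same_toP]
  constructor
  · rintro ⟨i', j', h1, h2, h⟩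
    rwa [Fin.ext h1, Fin.ext h2] at h
  · intro h; exact ⟨i, j, rfl, rfl, h⟩

theorem toP_isP {m : ℕ} (π : FP m) : IsP (Ico 0 m) (toP π) := by
  refine ⟨?_, ?_, ?_, ?_⟩
  · intro C hC
    obtain ⟨B, hB, rfl⟩ := mem_toP.mp hC
    exact (π.nonempty_of_mem_parts hB).map
  · intro C hC x hx
    obtain ⟨B, hB, rfl⟩ := mem_toP.mp hC
    obtain ⟨i, hi, rfl⟩ := mem_map.mp hx
    simp
  · intro x hx
    rw [mem_Ico] at hx
    obtain ⟨B, hB, h⟩ := π.exists_mem (mem_univ (⟨x, hx.2⟩ : Fin m))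
    exact ⟨_, mem_toP.mpr ⟨B, hB, rfl⟩, mem_map.mpr ⟨_, h, rfl⟩⟩
  · intro C hC D hD x hxC hxD
    obtain ⟨B, hB, rfl⟩ := mem_toP.mp hC
    obtain ⟨B', hB', rfl⟩ := mem_toP.mp hD
    obtain ⟨i, hi, rfl⟩ := mem_map.mp hxC
    obtain ⟨j, hj, hij⟩ := mem_map.mp hxD
    have : j = i := Fin.ext hij
    subst this
    rw [π.eq_of_mem_parts hB hB' hi hj]

theorem toP_ncr {m : ℕ} (π : FP m) : ncr (toP π) ↔ IsNC π := by
  constructor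
  · intro h i j k l h1 h2 h3 h4 h5
    exact same_toP'.mp (h i j k l h1 h2 h3 (same_toP'.mpr h4) (same_toP'.mpr h5))
  · intro h i j k l h1 h2 h3 h4 h5
    obtain ⟨i, k, rfl, rfl, g4⟩ := same_toP.mp h4
    obtain ⟨j, l, rfl, rfl, g5⟩ := same_toP.mp h5
    exact same_toP'.mpr (h i j k l h1 h2 h3 g4 g5)

theorem toP_inj {m : ℕ} {π ρ : FP m} (h : toP π = toP ρ) : π = ρ := by
  have : π.parts = ρ.parts := Finset.map_injective _ h
  exact Finpartition.ext this

theorem toP_surj {m : ℕ} {P : Finset (Finset ℕ)} (hP : IsP (Ico 0 m) P) :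
    ∃ π : FP m, toP π = P := by
  let s : Setoid (Fin m) :=
    { r := fun i j => same P i j
      iseqv := ⟨fun i => hP.refl (by simp), fun h => same_symm h, fun h h' => hP.trans h h'⟩ }
  refine ⟨Finpartition.ofSetoid s, ?_⟩
  refine (toP_isP _).ext hP fun x y => ?_
  have key : ∀ i j : Fin m, SameBlock (Finpartition.ofSetoid s) i j ↔ same P i j := by
    intro i j
    have h1 : j ∈ (Finpartition.ofSetoid s).part i ↔ same P i j :=
      Finpartition.mem_part_ofSetoid_iff_rel
    rw [← h1]
    constructor
    · rintro ⟨B, hB, hi, hj⟩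
      rwa [Finpartition.part_eq_of_mem _ hB hi]
    · intro h
      exact ⟨_, Finpartition.part_mem _ |>.mpr (mem_univ i),
        Finpartition.mem_part _ (mem_univ i), h⟩
  rw [same_toP]
  constructor
  · rintro ⟨i, j, rfl, rfl, h⟩
    exact (key i j).mp h
  · intro h
    have := hP.bd h
    exact ⟨⟨x, by omega⟩, ⟨y, by omega⟩, rfl, rfl, (key _ _).mpr h⟩

theorem sum_toP (m : ℕ) (ψ : Finset (Finset ℕ) → ℂ) :
    ∑ π : FP m, (if IsNC π then ψ (toP π) else 0) = ∑ P ∈ NCP (Ico 0 m), ψ P := by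
  rw [← Finset.sum_filter]
  refine Finset.sum_bij (fun π _ => toP π) ?_ ?_ ?_ ?_
  · intro π hπ
    exact mem_NCP.mpr ⟨toP_isP π, (toP_ncr π).mpr (mem_filter.mp hπ).2⟩
  · intro π _ ρ _ h
    exact toP_inj h
  · intro P hP
    rw [mem_NCP] at hP
    obtain ⟨π, rfl⟩ := toP_surj hP.1
    exact ⟨π, mem_filter.mpr ⟨mem_univ _, (toP_ncr π).mp hP.2⟩, rfl⟩
  · intros; rfl

/-- coefficient function on lists -/
def cf {k : ℕ} (f : NCSeries k) : List (Fin k) → ℂ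
  | [] => 1
  | a :: l => f l.length (fun j => (a :: l).get j)

theorem cf_eq {k : ℕ} (f : NCSeries k) (n : ℕ) (l : List (Fin k)) (h : l.length = n + 1) :
    cf f l = f n (fun j => l.get (Fin.cast h.symm j)) := by
  cases l with
  | nil => simp at h
  | cons a l =>
    obtain rfl : l.length = n := by simpa using h
    rfl

theorem cf_ofFn {k : ℕ} (f : NCSeries k) (n : ℕ) (w : Fin (n+1) → Fin k) :
    cf f (List.ofFn w) = f n w := by
  rw [cf_eq f n _ (by simp)]
  congr 1
  funext j
  simp [-List.ofFn_succ]

def extw {k n : ℕ} (w : Fin (n+1) → Fin k) (i : ℕ) : Fin k :=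
  if h : i < n + 1 then w ⟨i, h⟩ else w 0

theorem extw_val {k n : ℕ} (w : Fin (n+1) → Fin k) (i : Fin (n+1)) : extw w i = w i := by
  unfold extw
  rw [dif_pos i.isLt]

theorem wdI_extw {k n : ℕ} (w : Fin (n+1) → Fin k) : wdI (extw w) 0 (n+1) = List.ofFn w := by
  apply List.ext_getElem
  · simp [wdI]
  · intro i h1 h2
    have : i < n + 1 := by simpa using h2
    simp [-List.ofFn_succ, wdI, extw, this]

theorem wd_extw {k n : ℕ} (w : Fin (n+1) → Fin k) (B : Finset (Fin (n+1))) :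
    wd (extw w) (B.map Fin.valEmbedding) = (B.sort (· ≤ ·)).map w := by
  unfold wd
  have h : (B.map Fin.valEmbedding).sort (· ≤ ·) = (B.sort (· ≤ ·)).map Fin.val := by
    symm
    apply List.Perm.eq_of_pairwise (le := (· ≤ ·))
    · intro a b _ _ h1 h2; exact le_antisymm h1 h2
    · rw [List.pairwise_map]
      exact Finset.pairwise_sort B (· ≤ ·)
    · exact Finset.pairwise_sort _ _
    · rw [List.perm_ext_iff_of_nodup]
      · intro x; simp
      · exact (Finset.sort_nodup B _).map Fin.val_injective
      · exact Finset.sort_nodup _ _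
  rw [h, List.map_map]
  apply List.map_congr_left
  intro i _
  exact extw_val w i

theorem partCoeff_eq {k n : ℕ} (f : NCSeries k) (w : Fin (n+1) → Fin k) (B : Finset (Fin (n+1))) :
    partCoeff f w B = cf f (wd (extw w) (B.map Fin.valEmbedding)) := by
  rw [wd_extw]
  unfold partCoeff
  split_ifs with h
  · have hl : ((B.sort (· ≤ ·)).map w).length = (B.card - 1) + 1 := by
      have := Finset.card_pos.mpr h
      simp; omega
    rw [cf_eq f (B.card - 1) _ hl]
    congr 1
    funext j
    simp [Finset.coe_orderIsoOfFin_apply, Finset.orderEmbOfFin_apply]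
  · rw [Finset.not_nonempty_iff_eq_empty] at h
    subst h
    simp [cf]

theorem genCoeff_eq {k n : ℕ} (f : NCSeries k) (w : Fin (n+1) → Fin k) (π : FP (n+1)) :
    genCoeff f w π = wt (cf f) (extw w) (toP π) := by
  unfold genCoeff wt toP
  rw [Finset.prod_map]
  exact Finset.prod_congr rfl fun B _ => partCoeff_eq f w B

theorem interval_iff {m : ℕ} (π : FP m) : IsIntervalPartition π ↔ cvx (toP π) := by
  constructor
  · intro h x y z hxy hyz hs
    obtain ⟨i, j, rfl, rfl, B, hB, hi, hj⟩ := same_toP.mp hs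
    have hj' := j.isLt
    refine same_toP.mpr ⟨i, ⟨y, by omega⟩, rfl, rfl, B, hB, hi, ?_⟩
    exact h B hB i hi j hj ⟨y, by omega⟩ hxy hyz
  · intro h B hB x hx z hz y hxy hyz
    obtain ⟨C, hC, hxC, hyC⟩ := same_toP'.mp (h x y z hxy hyz (same_toP'.mpr ⟨B, hB, hx, hz⟩))
    rwa [π.eq_of_mem_parts hB hC hx hxC]

theorem interval_nc {m : ℕ} (π : FP m) (h : IsIntervalPartition π) : IsNC π := by
  intro i j k l h1 h2 _ h4 _
  obtain ⟨B, hB, hi, hk⟩ := h4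
  exact ⟨B, hB, hi, h B hB i hi k hk j h1.le h2.le⟩

theorem ll_iff {n : ℕ} (ρ : FP (n+1)) : Ll ρ (fullPart n) ↔ same (toP ρ) 0 (n + 1 - 1) := by
  have hp : (fullPart n).parts = {Finset.univ} := rfl
  have e : same (toP ρ) 0 (n + 1 - 1) ↔ SameBlock ρ 0 (Fin.last n) :=
    same_toP' (i := (0 : Fin (n+1))) (j := Fin.last n)
  rw [e]
  unfold Ll Refines
  simp only [hp, mem_singleton, exists_eq_left, forall_eq]
  constructor
  · rintro ⟨-, B, hB, x, y, hx, hy, hxB, hyB⟩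
    have h1 : x = 0 := le_antisymm (hx.2 0 (mem_univ _)) (Fin.zero_le _)
    have h2 : y = Fin.last n := le_antisymm (Fin.le_last _) (hy.2 _ (mem_univ _))
    subst h1; subst h2
    exact ⟨B, hB, hxB, hyB⟩
  · rintro ⟨B, hB, h1, h2⟩
    exact ⟨fun B _ => subset_univ B, B, hB, 0, Fin.last n, ⟨mem_univ _, fun y _ => Fin.zero_le _⟩,
      ⟨mem_univ _, fun y _ => Fin.le_last _⟩, h1, h2⟩

theorem wt_neg {k : ℕ} (c : List (Fin k) → ℂ) (W : ℕ → Fin k) {s : Finset ℕ}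
    {P : Finset (Finset ℕ)} (hP : IsP s P) :
    wt ((2 : ℂ) • lone - c) W P = (-1) ^ P.card * wt c W P := by
  unfold wt
  rw [← Finset.prod_const, ← Finset.prod_mul_distrib]
  refine Finset.prod_congr rfl fun B hB => ?_
  have hne : wd W B ≠ [] := by
    intro h
    have := congrArg List.length h
    have h2 := Finset.card_pos.mpr (hP.1 B hB)
    simp [wd] at this
    subst this
    simp at h2
  cases h : wd W B with
  | nil => exact absurd h hne
  | cons a l => simp [lone]

end DD

/-- Proposition 3.9.2: if `f = R_μ` and `g = η_μ`, then
`Cf_w(f) = Σ_{ρ ∈ NC(n), ρ ≪ 1_n} (-1)^{1+|ρ|} Cf_{w;ρ}(g)`. -/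
theorem statement5 (k : ℕ) (hk : 0 < k) (μ : Dist k) (hμ : IsDalg μ)
    (f g : NCSeries k) (hf : IsRTransform μ f) (hg : IsEtaSeries μ g)
    (n : ℕ) (w : Fin (n+1) → Fin k) :
    f n w = ∑ ρ : FP (n+1),
      if IsNC ρ ∧ Ll ρ (fullPart n) then
        (-1 : ℂ) ^ (1 + ρ.parts.card) * genCoeff g w ρ
      else 0 := by
  have hc : cf f [] = 1 := rfl
  have he : cf g [] = 1 := rfl
  have hM : lT (cf f) (cf f) = lK (cf g) (cf g) := by
    have key : ∀ (n : ℕ) (w : Fin (n+1) → Fin k),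
        lT (cf f) (cf f) (List.ofFn w) = lK (cf g) (cf g) (List.ofFn w) := by
      intro n w
      rw [← wdI_extw w, ← sum_T' (cf f) hc _ 0 (n+1) (by omega),
        ← sum_K' (cf g) he _ 0 (n+1) (by omega), ← sum_toP, ← sum_toP]
      have h1 := hf n w
      have h2 := hg n w
      simp only [genCoeff_eq] at h1 h2
      rw [← h1, h2]
      refine Finset.sum_congr rfl fun π _ => ?_
      by_cases hi : IsIntervalPartition π
      · rw [if_pos hi, if_pos (interval_nc π hi), if_pos ((interval_iff π).mp hi)]
      · have hi' : ¬ cvx (toP π) := fun h => hi ((interval_iff π).mpr h)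
        rw [if_neg hi, if_neg hi']
        split_ifs <;> rfl
    funext u
    cases u with
    | nil => rw [lT_nil, lK_nil, hc, he]
    | cons a l =>
      have := key l.length (fun j => (a :: l).get j)
      have e : List.ofFn (fun j : Fin (l.length + 1) => (a :: l).get j) = a :: l :=
        List.ofFn_get (a :: l)
      rwa [e] at this
  have hmain := lmain (cf f) _ (cf g) he rfl hM
  set d : List (Fin k) → ℂ := (2 : ℂ) • lone - cf g with hd
  have hd0 : d [] = 1 := by rw [hd]; simp [lone, he]; norm_num
  have h1 := congrFun hmain (List.ofFn w)
  rw [cf_ofFn] at h1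
  rw [h1]
  have hl : (lone : List (Fin k) → ℂ) (List.ofFn w) = 0 := by
    rw [List.ofFn_succ]; rfl
  rw [Pi.sub_apply, hl, zero_sub, ← wdI_extw w, ← sum_J' d hd0 _ 0 (n+1) (by omega), ← sum_toP,
    ← Finset.sum_neg_distrib]
  refine Finset.sum_congr rfl fun ρ _ => ?_
  rw [ll_iff, genCoeff_eq, hd, wt_neg (cf g) (extw w) (toP_isP ρ)]
  have hcard : (toP ρ).card = ρ.parts.card := by simp [toP]
  rw [hcard]
  by_cases a1 : IsNC ρ
  · by_cases a2 : same (toP ρ) 0 (n + 1 - 1)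
    · rw [if_pos a1, if_pos a2, if_pos ⟨a1, a2⟩]; ring
    · rw [if_pos a1, if_neg a2, if_neg (fun h => a2 h.2)]; simp
  · rw [if_neg a1, if_neg (fun h => a1 h.1)]; simp

end BBP
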